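/- Let S and A be nonempty finite sets, γ ∈ [0,1), ρ a probability distribution on S, π a stationary policy (π(a|s) ≥ 0 and Σ_{a∈A} π(a|s) = 1 for each s), and let P and P' be two transition kernels on S×A such that Σ_{s'∈S} |P(s'|s,a) − P'(s'|s,a)| ≤ ε for every (s,a). Suppose d, d' : S → [0,∞) are probability vectors (Σ_s d(s) = Σ_s d'(s) = 1) satisfying the flow-conservation equations d(s) = (1−γ)·ρ(s) + γ·Σ_{(s',a')} P(s|s',a')·π(a'|s')·d(s') and d'(s) = (1−γ)·ρ(s) + γ·Σ_{(s',a')} P'(s|s',a')·π(a'|s')·d'(s') for all s ∈ S. Then Σ_{s∈S} |d(s) − d'(s)| ≤ γ·ε/(1−γ). -/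

import Mathlib

open scoped BigOperators

/-!
Write `P_π` for the state-to-state matrix induced by the policy. Subtracting the two flow equations
gives `d - d' = γ ((d - d') P_π + d' (P_π - P'_π))`. Acting on row vectors, `P_π` does not increase
the `ℓ¹` norm and `P_π - P'_π` scales it by at most `ε`, so
`‖d - d'‖₁ ≤ γ (‖d - d'‖₁ + ε ‖d'‖₁)`, which is solved for `‖d - d'‖₁`.
-/

open Matrix

section VecMul

variable {m n R : Type*} [Fintype m] [Fintype n]

theorem sum_abs_vecMul_le [Ring R] [LinearOrder R] [IsOrderedRing R] {M : Matrix m n R} {c : R}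
    (hM : ∀ i, ∑ j, |M i j| ≤ c) (v : m → R) :
    ∑ j, |(v ᵥ* M) j| ≤ (∑ i, |v i|) * c :=
  calc
    ∑ j, |(v ᵥ* M) j| ≤ ∑ j, ∑ i, |v i| * |M i j| :=
      Finset.sum_le_sum fun j _ => by
        simpa only [vecMul, dotProduct, abs_mul] using
          Finset.abs_sum_le_sum_abs (fun i => v i * M i j) Finset.univ
    _ = ∑ i, |v i| * ∑ j, |M i j| := by
      rw [Finset.sum_comm]
      simp only [Finset.mul_sum]
    _ ≤ ∑ i, |v i| * c :=
      Finset.sum_le_sum fun i _ => mul_le_mul_of_nonneg_left (hM i) (abs_nonneg _)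
    _ = (∑ i, |v i|) * c := (Finset.sum_mul ..).symm

theorem sub_eq_smul_vecMul_add_vecMul_of_eq_add_smul_vecMul [Ring R] {γ : R} {b d d' : n → R}
    {M M' : Matrix n n R} (hd : d = b + γ • (d ᵥ* M)) (hd' : d' = b + γ • (d' ᵥ* M')) :
    d - d' = γ • ((d - d') ᵥ* M + d' ᵥ* (M - M')) :=
  calc
    d - d' = γ • (d ᵥ* M) - γ • (d' ᵥ* M') := by
      conv_lhs => rw [hd, hd', add_sub_add_left_eq_sub]
    _ = γ • ((d - d') ᵥ* M + d' ᵥ* (M - M')) := by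
      rw [sub_vecMul, vecMul_sub, sub_add_sub_cancel, smul_sub]

theorem sum_abs_sub_le_of_eq_add_smul_vecMul [Field R] [LinearOrder R] [IsStrictOrderedRing R]
    {γ ε : R} (hγ0 : 0 ≤ γ) (hγ1 : γ < 1) {b d d' : n → R} {M M' : Matrix n n R}
    (hM : ∀ i, ∑ j, |M i j| ≤ 1) (hclose : ∀ i, ∑ j, |(M - M') i j| ≤ ε)
    (hd : d = b + γ • (d ᵥ* M)) (hd' : d' = b + γ • (d' ᵥ* M')) :
    ∑ i, |d i - d' i| ≤ γ * ε * (∑ i, |d' i|) / (1 - γ) := by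
  have abs_diff (i : n) :
      |d i - d' i| = γ * |((d - d') ᵥ* M) i + (d' ᵥ* (M - M')) i| := by
    have diff : d i - d' i = γ * (((d - d') ᵥ* M) i + (d' ᵥ* (M - M')) i) :=
      congrFun (sub_eq_smul_vecMul_add_vecMul_of_eq_add_smul_vecMul hd hd') i
    rw [diff, abs_mul, abs_of_nonneg hγ0]
  have transported : ∑ i, |((d - d') ᵥ* M) i| ≤ ∑ i, |d i - d' i| := by
    simpa only [mul_one, Pi.sub_apply] using sum_abs_vecMul_le hM (d - d')
  have self_bound : ∑ i, |d i - d' i| ≤ γ * (∑ i, |d i - d' i| + (∑ i, |d' i|) * ε) :=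
    calc
      ∑ i, |d i - d' i| = γ * ∑ i, |((d - d') ᵥ* M) i + (d' ᵥ* (M - M')) i| := by
        rw [Finset.mul_sum]
        exact Finset.sum_congr rfl fun i _ => abs_diff i
      _ ≤ γ * (∑ i, |((d - d') ᵥ* M) i| + ∑ i, |(d' ᵥ* (M - M')) i|) := by
        rw [← Finset.sum_add_distrib]
        gcongr
        exact abs_add_le _ _
      _ ≤ γ * (∑ i, |d i - d' i| + (∑ i, |d' i|) * ε) :=
        mul_le_mul_of_nonneg_left (add_le_add transported (sum_abs_vecMul_le hclose d')) hγ0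
  rw [le_div_iff₀ (sub_pos.mpr hγ1)]
  linarith

end VecMul

section PolicyKernel

variable {S A T R : Type*} [Fintype A]

/-- The transition matrix `P_π(t | s) = ∑ a, π(a | s) P(t | s, a)` of the Markov chain obtained by
following the policy `π` under the kernel `P`, with `π(a | s)` and `P(t | s, a)` encoded as `π s a`
and `P s a t`. -/
def policyKernel [NonUnitalNonAssocSemiring R] (π : S → A → R) (P : S → A → T → R) :
    Matrix S T R :=
  Matrix.of fun s => π s ᵥ* Matrix.of (P s)

theorem policyKernel_sub [NonUnitalNonAssocRing R] (π : S → A → R) (P P' : S → A → T → R) :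
    policyKernel π (P - P') = policyKernel π P - policyKernel π P' :=
  Matrix.ext fun s t => congrFun (vecMul_sub (of (P s)) (of (P' s)) (π s)) t

theorem vecMul_policyKernel_apply [Fintype S] [CommSemiring R] (π : S → A → R)
    (P : S → A → T → R) (d : S → R) (t : T) :
    (d ᵥ* policyKernel π P) t = ∑ s, ∑ a, P s a t * π s a * d s := by
  simp only [policyKernel, vecMul, dotProduct, of_apply, Finset.mul_sum]
  exact Finset.sum_congr rfl fun s _ => Finset.sum_congr rfl fun a _ => by ring

theorem sum_abs_policyKernel_le [Fintype T] [Ring R] [LinearOrder R] [IsOrderedRing R]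
    {π : S → A → R} {P : S → A → T → R} {c : R} {s : S} (hπ0 : ∀ a, 0 ≤ π s a)
    (hπ1 : ∑ a, π s a = 1) (hP : ∀ a, ∑ t, |P s a t| ≤ c) :
    ∑ t, |policyKernel π P s t| ≤ c := by
  simpa only [policyKernel, of_apply, abs_of_nonneg (hπ0 _), hπ1, one_mul] using
    sum_abs_vecMul_le (M := of (P s)) hP (π s)

end PolicyKernel

theorem stmt8_general {S A K : Type*} [Fintype S] [Fintype A]
    [Field K] [LinearOrder K] [IsStrictOrderedRing K]
    {γ ε : K} (hγ0 : 0 ≤ γ) (hγ1 : γ < 1) {ρ : S → K}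
    {π : S → A → K} (hπ0 : ∀ s a, 0 ≤ π s a) (hπ1 : ∀ s, ∑ a, π s a = 1)
    {P P' : S → A → S → K} (hP : ∀ s a, ∑ s', |P s a s'| ≤ 1)
    (hclose : ∀ s a, ∑ s', |P s a s' - P' s a s'| ≤ ε)
    {d d' : S → K}
    (hflow : ∀ s, d s = (1 - γ) * ρ s + γ * ∑ s', ∑ a', P s' a' s * π s' a' * d s')
    (hflow' : ∀ s, d' s = (1 - γ) * ρ s + γ * ∑ s', ∑ a', P' s' a' s * π s' a' * d' s') :
    ∑ s, |d s - d' s| ≤ γ * ε * (∑ s, |d' s|) / (1 - γ) := by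
  have flow_vecMul {Q : S → A → S → K} {v : S → K}
      (hv : ∀ s, v s = (1 - γ) * ρ s + γ * ∑ s', ∑ a', Q s' a' s * π s' a' * v s') :
      v = (1 - γ) • ρ + γ • (v ᵥ* policyKernel π Q) :=
    funext fun s => by
      simpa only [Pi.add_apply, Pi.smul_apply, smul_eq_mul, vecMul_policyKernel_apply] using hv s
  refine sum_abs_sub_le_of_eq_add_smul_vecMul hγ0 hγ1
    (fun s => sum_abs_policyKernel_le (hπ0 s) (hπ1 s) (hP s)) (fun s => ?_)
    (flow_vecMul hflow) (flow_vecMul hflow')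
  rw [← policyKernel_sub]
  exact sum_abs_policyKernel_le (hπ0 s) (hπ1 s) (hclose s)

/-- Closeness of the discounted state-occupancy measures of a common
stationary policy under two transition kernels that are `ε`-close in `ℓ¹` distance,
via the flow-conservation characterization. -/
theorem stmt8 {S A : Type*} [Fintype S] [Fintype A] [Nonempty S] [Nonempty A]
    (γ ε : ℝ) (hγ0 : 0 ≤ γ) (hγ1 : γ < 1)
    (ρ : S → ℝ) (hρ0 : ∀ s, 0 ≤ ρ s) (hρ1 : ∑ s, ρ s = 1)
    (π : S → A → ℝ) (hπ0 : ∀ s a, 0 ≤ π s a) (hπ1 : ∀ s, ∑ a, π s a = 1)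
    (P P' : S → A → S → ℝ)
    (hP : ∀ s a, (∀ s', 0 ≤ P s a s') ∧ ∑ s', P s a s' = 1)
    (hP' : ∀ s a, (∀ s', 0 ≤ P' s a s') ∧ ∑ s', P' s a s' = 1)
    (hclose : ∀ s a, ∑ s', |P s a s' - P' s a s'| ≤ ε)
    (d d' : S → ℝ)
    (hd0 : ∀ s, 0 ≤ d s) (hd1 : ∑ s, d s = 1)
    (hd'0 : ∀ s, 0 ≤ d' s) (hd'1 : ∑ s, d' s = 1)
    (hflow : ∀ s, d s =
      (1 - γ) * ρ s + γ * ∑ s' : S, ∑ a' : A, P s' a' s * π s' a' * d s')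
    (hflow' : ∀ s, d' s =
      (1 - γ) * ρ s + γ * ∑ s' : S, ∑ a' : A, P' s' a' s * π s' a' * d' s') :
    ∑ s, |d s - d' s| ≤ γ * ε / (1 - γ) := by
  simpa only [abs_of_nonneg (hd'0 _), hd'1, mul_one] using stmt8_general hγ0 hγ1 hπ0 hπ1
    (fun s a => by simp only [abs_of_nonneg ((hP s a).1 _), (hP s a).2, le_refl])
    hclose hflow hflow'
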